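/- Let r, d ∈ ℕ, C > 0, and let φ : ℝ → ℝ be continuous with |φ(x)| ≤ C(1+|x|^d) for all x. Then there exists a constant M > 0, depending only on r and d, such that for all t ≥ 1 and all x ∈ ℝ, |P_t φ(x) - Σ_{k=0}^{r-1} c_k(P_t φ) H_k(x)| ≤ e^{-rt} · C · M · (1+|x|^{d+r}). -/

import Mathlib

/-!
Write `ρ = e^{-t}`, `σ = √(1-e^{-2t})` and `ψ(z) = φ(σz)`. Then `P_t φ(x) = g(ρx/σ)` where
`g(u) = ∫ ψ(y+u) dγ(y)`. For `t ≥ 1` one has `1/2 ≤ σ ≤ 1`, hence `ρ/σ ≤ 2ρ ≤ 1`.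

The function `g` differs from a polynomial `T` of degree less than `r` by at most
`C · const · |u|^r (1+|u|)^d` (`shift_taylor`). Indeed `g(u) = e^{-u²/2} ∫ ψ(z) e^{uz} dγ(z)`
(`integral_shift`). For `|u| ≤ 1` both factors have Taylor expansions of order `r` with explicit
remainders, and `T` is the truncated product of the two Taylor polynomials. For `|u| ≥ 1`, both
`g` and `T` obey the bound separately. Substituting `u = ρx/σ` gives `P_t φ = p + R` with `p` a
polynomial of degree less than `r` and `|R(x)| ≤ C · const · ρ^r (1+|x|)^{d+r}`.

The Hermite projection of order `r` fixes `p` (`hermite_expansion`, from orthogonality, itself a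
consequence of Stein's identity), so the error in the theorem equals that of `R`. It is bounded
by a constant times the bound on `R`, since the coefficients `c_k(R)` are controlled by Gaussian
moments and `|H_k(x)| ≤ const · (1+|x|)^k` (`projection_bound`).
-/

open MeasureTheory ProbabilityTheory

/-- The standard Gaussian measure on `ℝ`. -/
noncomputable def gaussγ : Measure ℝ := gaussianReal 0 1

/-- The `k`-th probabilists' Hermite polynomial, evaluated at `x`. -/
noncomputable def Hpoly (k : ℕ) (x : ℝ) : ℝ := Polynomial.aeval x (Polynomial.hermite k)

/-- The `k`-th Hermite coefficient of `ψ` : `c_k(ψ) = (1/k!) ∫ H_k ψ dγ`. -/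
noncomputable def ccoef (k : ℕ) (ψ : ℝ → ℝ) : ℝ :=
  (1 / (Nat.factorial k : ℝ)) * ∫ x, Hpoly k x * ψ x ∂gaussγ

/-- The Ornstein–Uhlenbeck (Mehler) semigroup. -/
noncomputable def Pt (t : ℝ) (φ : ℝ → ℝ) (x : ℝ) : ℝ :=
  ∫ y, φ (x * Real.exp (-t) + Real.sqrt (1 - Real.exp (-2 * t)) * y) ∂gaussγ

open Polynomial

/-! ### Integrability against the Gaussian measure -/

instance isProbabilityMeasure_gaussγ : IsProbabilityMeasure gaussγ := by
  unfold gaussγ; infer_instance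

lemma integrable_weight (n : ℕ) :
    Integrable (fun z : ℝ => (1 + |z|) ^ n * Real.exp |z|) gaussγ := by
  have h1 : Integrable (fun x : ℝ => Real.exp (2 * x)) gaussγ := integrable_exp_mul_gaussianReal 2
  have h2 : Integrable (fun x : ℝ => Real.exp (-2 * x)) gaussγ :=
    integrable_exp_mul_gaussianReal (-2)
  refine ((h1.add h2).const_mul ((n.factorial : ℝ) * Real.exp 1)).mono'
    (by fun_prop) (Filter.Eventually.of_forall fun z => ?_)
  have hz : 0 ≤ |z| := abs_nonneg z
  have hp : (1 + |z|) ^ n ≤ n.factorial * Real.exp (1 + |z|) := by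
    have := Real.pow_div_factorial_le_exp (x := 1 + |z|) (by positivity) n
    rwa [div_le_iff₀ (by positivity), mul_comm] at this
  rw [Real.norm_of_nonneg (by positivity)]
  calc (1 + |z|) ^ n * Real.exp |z| ≤ n.factorial * Real.exp (1 + |z|) * Real.exp |z| := by gcongr
    _ = n.factorial * Real.exp 1 * Real.exp (2 * |z|) := by
      rw [Real.exp_add, two_mul, Real.exp_add]; ring
    _ ≤ _ := by
      gcongr
      simp only [Pi.add_apply]
      rcases abs_cases z with ⟨h, _⟩ | ⟨h, _⟩ <;> rw [h]
      · linarith [Real.exp_pos (-2 * z)]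
      · rw [mul_neg, ← neg_mul]; linarith [Real.exp_pos (2 * z)]

/-- The dominating constant `∫ (1+|z|)^n e^{|z|} dγ(z)` for all Gaussian integrals below. -/
noncomputable def weightInt (n : ℕ) : ℝ := ∫ z, (1 + |z|) ^ n * Real.exp |z| ∂gaussγ

lemma weightInt_nonneg (n : ℕ) : 0 ≤ weightInt n :=
  integral_nonneg fun z => by positivity

/-- Domination by the weight yields integrability together with a bound on the integral. -/
lemma integrable_and_bound {n : ℕ} {K : ℝ} {g : ℝ → ℝ} (hg : AEStronglyMeasurable g gaussγ)
    (hb : ∀ z, |g z| ≤ K * ((1 + |z|) ^ n * Real.exp |z|)) :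
    Integrable g gaussγ ∧ |∫ z, g z ∂gaussγ| ≤ K * weightInt n := by
  have hi := (integrable_weight n).const_mul K
  refine ⟨hi.mono' hg (Filter.Eventually.of_forall hb), ?_⟩
  rw [weightInt, ← integral_const_mul]
  exact norm_integral_le_of_norm_le (f := g) hi (Filter.Eventually.of_forall hb)

lemma weight_bound_of_pow {n : ℕ} {K : ℝ} {g : ℝ → ℝ} (hb : ∀ z, |g z| ≤ K * (1 + |z|) ^ n)
    (z : ℝ) : |g z| ≤ K * ((1 + |z|) ^ n * Real.exp |z|) := by
  rw [← mul_assoc]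
  exact (hb z).trans (le_mul_of_one_le_right ((abs_nonneg _).trans (hb z))
    (Real.one_le_exp (abs_nonneg z)))

lemma exists_eval_bound (p : ℝ[X]) {n : ℕ} (hn : p.natDegree ≤ n) :
    ∃ N : ℝ, 0 ≤ N ∧ ∀ x, |p.eval x| ≤ N * (1 + |x|) ^ n := by
  refine ⟨∑ i ∈ Finset.range (p.natDegree + 1), |p.coeff i|, by positivity, fun x => ?_⟩
  rw [eval_eq_sum_range, Finset.sum_mul]
  refine (Finset.abs_sum_le_sum_abs _ _).trans (Finset.sum_le_sum fun i hi => ?_)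
  rw [abs_mul, abs_pow]
  have hi' : i ≤ n := by have := Finset.mem_range.1 hi; omega
  gcongr
  calc |x| ^ i ≤ (1 + |x|) ^ i := by gcongr; linarith
    _ ≤ (1 + |x|) ^ n := pow_le_pow_right₀ (by linarith [abs_nonneg x]) hi'

lemma integrable_eval (p : ℝ[X]) : Integrable (fun x => p.eval x) gaussγ := by
  obtain ⟨N, _, hN⟩ := exists_eval_bound p le_rfl
  exact (integrable_and_bound p.continuous.aestronglyMeasurable (weight_bound_of_pow hN)).1

/-! ### Hermite expansion of polynomials -/

/-- The Hermite polynomial with real coefficients. -/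
noncomputable def hermR (k : ℕ) : ℝ[X] := (hermite k).map (Int.castRingHom ℝ)

lemma Hpoly_eq (k : ℕ) (x : ℝ) : Hpoly k x = (hermR k).eval x := by
  rw [Hpoly, hermR, eval_map, aeval_def]; rfl

lemma hermR_succ (k : ℕ) : hermR (k + 1) = X * hermR k - derivative (hermR k) := by
  simp [hermR, hermite_succ]

lemma hermR_monic (k : ℕ) : (hermR k).Monic := (hermite_monic k).map _

lemma natDegree_hermR (k : ℕ) : (hermR k).natDegree = k := by
  rw [hermR, (hermite_monic k).natDegree_map, natDegree_hermite]

lemma integral_gaussγ (f : ℝ → ℝ) :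
    ∫ x, f x ∂gaussγ = ∫ x, gaussianPDFReal 0 1 x * f x := by
  rw [gaussγ, integral_gaussianReal_eq_integral_smul one_ne_zero]; rfl

lemma integrable_pdf_mul {f : ℝ → ℝ} (hf : Integrable f gaussγ) :
    Integrable (fun x => gaussianPDFReal 0 1 x * f x) := by
  rw [gaussγ, gaussianReal_of_var_ne_zero _ one_ne_zero,
    integrable_withDensity_iff_integrable_smul' (measurable_gaussianPDF 0 1)
      (Filter.Eventually.of_forall fun x => gaussianPDF_lt_top)] at hf
  simpa using hf

/-- Stein's identity for polynomials: `(p · pdf)' = (p' - x p) · pdf` integrates to zero. -/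
lemma integral_stein (p : ℝ[X]) :
    ∫ x, (X * p - derivative p).eval x ∂gaussγ = 0 := by
  have hpdf : ∀ x, HasDerivAt (gaussianPDFReal 0 1) (-x * gaussianPDFReal 0 1 x) x := by
    intro x
    have h : HasDerivAt (fun x : ℝ => -(x - 0) ^ 2 / (2 * ((1 : NNReal) : ℝ))) (-x) x := by
      have := ((((hasDerivAt_id x).sub_const 0).pow 2).neg).div_const (2 * ((1 : NNReal) : ℝ))
      refine this.congr_deriv ?_
      simp
      ring
    have := (h.exp).const_mul (Real.sqrt (2 * Real.pi * ((1 : NNReal) : ℝ)))⁻¹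
    rw [gaussianPDFReal_def]
    refine this.congr_deriv ?_
    ring
  have h := integral_eq_zero_of_hasDerivAt_of_integrable
    (f := fun x => gaussianPDFReal 0 1 x * p.eval x)
    (f' := fun x => -(gaussianPDFReal 0 1 x * (X * p - derivative p).eval x))
    (fun x => ((hpdf x).mul (p.hasDerivAt x)).congr_deriv (by simp; ring))
    (integrable_pdf_mul (integrable_eval _)).neg (integrable_pdf_mul (integrable_eval _))
  rw [integral_neg, neg_eq_zero] at h
  rw [integral_gaussγ, h]

lemma integral_hermR_succ_mul (k : ℕ) (p : ℝ[X]) :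
    ∫ x, (hermR (k + 1) * p).eval x ∂gaussγ = ∫ x, (hermR k * derivative p).eval x ∂gaussγ := by
  have h := integral_stein (hermR k * p)
  have e : X * (hermR k * p) - derivative (hermR k * p)
      = hermR (k + 1) * p - hermR k * derivative p := by
    rw [hermR_succ, derivative_mul]; ring
  rw [e] at h
  simp_rw [eval_sub] at h
  rwa [integral_sub (integrable_eval _) (integrable_eval _), sub_eq_zero] at h

lemma integral_hermR_mul (k : ℕ) (p : ℝ[X]) :
    ∫ x, (hermR k * p).eval x ∂gaussγ = ∫ x, (derivative^[k] p).eval x ∂gaussγ := by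
  induction k generalizing p with
  | zero => simp [hermR]
  | succ k ih => rw [integral_hermR_succ_mul, ih, Function.iterate_succ_apply]

lemma integral_hermR_mul_of_lt {j k : ℕ} (h : j < k) :
    ∫ x, (hermR k * hermR j).eval x ∂gaussγ = 0 := by
  rw [integral_hermR_mul, iterate_derivative_eq_zero (by rwa [natDegree_hermR])]
  simp

lemma integral_hermR_mul_self (k : ℕ) :
    ∫ x, (hermR k * hermR k).eval x ∂gaussγ = k.factorial := by
  rw [integral_hermR_mul]
  have h : derivative^[k] (hermR k) = C (k.factorial : ℝ) := by
    have h0 : (derivative^[k] (hermR k)).natDegree = 0 := by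
      have := natDegree_iterate_derivative (hermR k) k
      rw [natDegree_hermR] at this; omega
    rw [eq_C_of_natDegree_eq_zero h0, coeff_iterate_derivative]
    have := (hermR_monic k).coeff_natDegree
    rw [natDegree_hermR] at this
    simp [this, Nat.descFactorial_self]
  simp [h]

lemma ccoef_eval (k : ℕ) (p : ℝ[X]) :
    ccoef k (fun x => p.eval x) = 1 / k.factorial * ∫ x, (hermR k * p).eval x ∂gaussγ := by
  simp [ccoef, Hpoly_eq]

lemma ccoef_hermR (k j : ℕ) : ccoef k (fun x => (hermR j).eval x) = if k = j then 1 else 0 := by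
  rw [ccoef_eval]
  split_ifs with h
  · subst h
    rw [integral_hermR_mul_self]
    field_simp
  · rcases lt_or_gt_of_ne h with h | h
    · rw [mul_comm (hermR k), integral_hermR_mul_of_lt h, mul_zero]
    · rw [integral_hermR_mul_of_lt h, mul_zero]

/-- The Hermite projection of order `r` fixes polynomials of degree less than `r`. -/
lemma hermite_expansion {r : ℕ} {p : ℝ[X]} (hp : p ∈ degreeLT ℝ r) (x : ℝ) :
    ∑ k ∈ Finset.range r, ccoef k (fun x => p.eval x) * Hpoly k x = p.eval x := by
  let S : Polynomial.Sequence ℝ := ⟨hermR, fun i => by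
    rw [degree_eq_natDegree (hermR_monic i).ne_zero, natDegree_hermR]⟩
  have hS := S.span_degreeLT (m := r) fun i _ => by
    change IsUnit (hermR i).leadingCoeff
    rw [(hermR_monic i).leadingCoeff]; exact isUnit_one
  rw [← hS] at hp
  induction hp using Submodule.span_induction with
  | mem p hp =>
    obtain ⟨j, hj, rfl⟩ := hp
    change ∑ k ∈ Finset.range r, ccoef k (fun x => (hermR j).eval x) * Hpoly k x = (hermR j).eval x
    simp_rw [ccoef_hermR]
    rw [Finset.sum_eq_single_of_mem j (Finset.mem_range.2 hj) (fun k _ hk => by simp [hk])]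
    simp [Hpoly_eq]
  | zero => simp [ccoef]
  | add p q _ _ hp hq =>
    rw [eval_add, ← hp, ← hq, ← Finset.sum_add_distrib]
    refine Finset.sum_congr rfl fun k _ => ?_
    simp_rw [ccoef_eval, mul_add, eval_add]
    rw [integral_add (integrable_eval _) (integrable_eval _)]
    ring
  | smul a p _ hp =>
    rw [eval_smul, ← hp, smul_eq_mul, Finset.mul_sum]
    refine Finset.sum_congr rfl fun k _ => ?_
    simp_rw [ccoef_eval, mul_smul_comm, eval_smul, smul_eq_mul]
    rw [integral_const_mul]
    ring

/-! ### Taylor expansion of Gaussian averages of translates -/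

/-- Translating the Gaussian measure by `u` multiplies its density by `e^{uz - u²/2}`. -/
lemma integral_shift (ψ : ℝ → ℝ) (u : ℝ) :
    ∫ y, ψ (y + u) ∂gaussγ = Real.exp (-u ^ 2 / 2) * ∫ z, ψ z * Real.exp (u * z) ∂gaussγ := by
  rw [integral_gaussγ, integral_gaussγ, ← integral_const_mul,
    ← integral_sub_right_eq_self (fun x => gaussianPDFReal 0 1 x * ψ (x + u)) u]
  refine integral_congr_ae (Filter.Eventually.of_forall fun z => ?_)
  simp only [gaussianPDFReal_def, sub_add_cancel]
  have h : Real.exp (-(z - u - 0) ^ 2 / (2 * ((1 : NNReal) : ℝ)))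
      = Real.exp (-u ^ 2 / 2) * Real.exp (-(z - 0) ^ 2 / (2 * ((1 : NNReal) : ℝ)))
        * Real.exp (u * z) := by
    rw [← Real.exp_add, ← Real.exp_add]
    congr 1
    simp
    ring
  rw [h]
  ring

lemma exp_taylor_bound (w : ℝ) (n : ℕ) :
    |Real.exp w - ∑ m ∈ Finset.range n, w ^ m / m.factorial| ≤ |w| ^ n * Real.exp |w| := by
  have h := Complex.norm_exp_sub_sum_le_norm_mul_exp (w : ℂ) n
  rw [Complex.norm_real, Real.norm_eq_abs] at h
  rw [← Real.norm_eq_abs, ← Complex.norm_real]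
  push_cast
  exact h

/-- Coefficient of `u^{2i}` in the expansion of `e^{-u²/2}`. -/
noncomputable def gaussCoef (i : ℕ) : ℝ := (-1 / 2) ^ i / i.factorial

/-- Coefficient of `u^j` in the expansion of `∫ ψ(z) e^{uz} dγ(z)`. -/
noncomputable def expMoment (ψ : ℝ → ℝ) (j : ℕ) : ℝ := ∫ z, ψ z * (z ^ j / j.factorial) ∂gaussγ

/-- The part of degree less than `r` of the product of the two expansions with coefficients
`gaussCoef` and `expMoment ψ`. -/
noncomputable def taylorPoly (r : ℕ) (ψ : ℝ → ℝ) : ℝ[X] :=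
  ∑ i ∈ Finset.range r, ∑ j ∈ Finset.range r,
    if 2 * i + j < r then monomial (2 * i + j) (gaussCoef i * expMoment ψ j) else 0

lemma taylorPoly_mem (r : ℕ) (ψ : ℝ → ℝ) : taylorPoly r ψ ∈ degreeLT ℝ r := by
  refine Submodule.sum_mem _ fun i _ => Submodule.sum_mem _ fun j _ => ?_
  split_ifs with h
  · exact mem_degreeLT.2 ((degree_monomial_le _ _).trans_lt (by exact_mod_cast h))
  · exact Submodule.zero_mem _

lemma taylorPoly_eval (r : ℕ) (ψ : ℝ → ℝ) (u : ℝ) :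
    (taylorPoly r ψ).eval u = ∑ i ∈ Finset.range r, ∑ j ∈ Finset.range r,
      if 2 * i + j < r then gaussCoef i * expMoment ψ j * u ^ (2 * i + j) else 0 := by
  simp only [taylorPoly, eval_finsetSum]
  refine Finset.sum_congr rfl fun i _ => Finset.sum_congr rfl fun j _ => ?_
  split_ifs <;> simp

lemma abs_gaussCoef_le (i : ℕ) : |gaussCoef i| ≤ 1 := by
  have h1 : (1 : ℝ) ≤ i.factorial := by exact_mod_cast Nat.one_le_iff_ne_zero.2 i.factorial_ne_zero
  rw [gaussCoef, abs_div, abs_pow, Nat.abs_cast]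
  refine div_le_one_of_le₀ (le_trans (pow_le_one₀ (abs_nonneg _) ?_) h1) (by positivity)
  norm_num [abs_le]

section Expansion

variable {r d : ℕ} {C : ℝ} {ψ : ℝ → ℝ}

lemma abs_mul_pow_le (hψ : ∀ z, |ψ z| ≤ C * (1 + |z|) ^ d) {j : ℕ} (hj : j ≤ r) (z : ℝ) :
    |ψ z| * |z| ^ j ≤ C * (1 + |z|) ^ (d + r) := by
  have hz := abs_nonneg z
  calc |ψ z| * |z| ^ j ≤ (C * (1 + |z|) ^ d) * (1 + |z|) ^ r := by
        refine mul_le_mul (hψ z) ?_ (by positivity) ((abs_nonneg _).trans (hψ z))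
        exact (pow_le_pow_left₀ hz (by linarith) j).trans
          (pow_le_pow_right₀ (by linarith) hj)
    _ = _ := by rw [pow_add]; ring

lemma expMoment_bound (hc : Continuous ψ) (hψ : ∀ z, |ψ z| ≤ C * (1 + |z|) ^ d) {j : ℕ}
    (hj : j ≤ r) :
    Integrable (fun z => ψ z * (z ^ j / j.factorial)) gaussγ ∧
      |expMoment ψ j| ≤ C * weightInt (d + r) := by
  refine integrable_and_bound (by fun_prop) (weight_bound_of_pow fun z => ?_)
  have h1 : (1 : ℝ) ≤ j.factorial := by exact_mod_cast Nat.one_le_iff_ne_zero.2 j.factorial_ne_zero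
  rw [abs_mul, abs_div, abs_pow, Nat.abs_cast]
  refine le_trans ?_ (abs_mul_pow_le hψ hj z)
  gcongr
  exact div_le_self (by positivity) h1

lemma exp_abs_mul_le {u : ℝ} (hu : |u| ≤ 1) (z : ℝ) : Real.exp |u * z| ≤ Real.exp |z| := by
  rw [abs_mul]
  exact Real.exp_le_exp.2 (mul_le_of_le_one_left (abs_nonneg z) hu)

lemma exp_integral_bound (hc : Continuous ψ) (hψ : ∀ z, |ψ z| ≤ C * (1 + |z|) ^ d) {u : ℝ}
    (hu : |u| ≤ 1) :
    Integrable (fun z => ψ z * Real.exp (u * z)) gaussγ ∧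
      |∫ z, ψ z * Real.exp (u * z) ∂gaussγ| ≤ C * weightInt (d + r) := by
  refine integrable_and_bound (by fun_prop) fun z => ?_
  rw [abs_mul, Real.abs_exp, ← mul_assoc]
  refine mul_le_mul (by simpa using abs_mul_pow_le hψ (Nat.zero_le r) z)
    ((Real.exp_le_exp.2 (le_abs_self _)).trans (exp_abs_mul_le hu z)) (by positivity) ?_
  exact (mul_nonneg (abs_nonneg (ψ z)) (pow_nonneg (abs_nonneg z) 0)).trans
    (abs_mul_pow_le hψ (Nat.zero_le r) z)

lemma exp_integral_taylor (hc : Continuous ψ) (hψ : ∀ z, |ψ z| ≤ C * (1 + |z|) ^ d) {u : ℝ}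
    (hu : |u| ≤ 1) :
    |∫ z, ψ z * Real.exp (u * z) ∂gaussγ - ∑ j ∈ Finset.range r, expMoment ψ j * u ^ j|
      ≤ C * |u| ^ r * weightInt (d + r) := by
  have e : ∫ z, ψ z * Real.exp (u * z) ∂gaussγ - ∑ j ∈ Finset.range r, expMoment ψ j * u ^ j
      = ∫ z, ψ z * (Real.exp (u * z) - ∑ j ∈ Finset.range r, (u * z) ^ j / j.factorial) ∂gaussγ := by
    have hj : ∀ j ∈ Finset.range r,
        Integrable (fun z => ψ z * (z ^ j / j.factorial) * u ^ j) gaussγ := fun j hj =>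
      (expMoment_bound hc hψ (Finset.mem_range.1 hj).le).1.mul_const _
    simp only [expMoment, ← integral_mul_const]
    rw [← integral_finsetSum _ hj, ← integral_sub (exp_integral_bound (r := r) hc hψ hu).1
      (integrable_finsetSum _ hj)]
    refine integral_congr_ae (Filter.Eventually.of_forall fun z => ?_)
    simp only [mul_sub, Finset.mul_sum]
    congr 1
    refine Finset.sum_congr rfl fun j _ => ?_
    rw [mul_pow]; ring
  rw [e]
  refine (integrable_and_bound (by fun_prop) fun z => ?_).2
  rw [abs_mul]
  calc |ψ z| * |Real.exp (u * z) - ∑ j ∈ Finset.range r, (u * z) ^ j / j.factorial|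
      ≤ |ψ z| * (|u * z| ^ r * Real.exp |z|) := by
        gcongr
        refine (exp_taylor_bound _ _).trans ?_
        gcongr ?_ * ?_
        exact exp_abs_mul_le hu z
    _ = (|ψ z| * |z| ^ r) * |u| ^ r * Real.exp |z| := by rw [abs_mul, mul_pow]; ring
    _ ≤ (C * (1 + |z|) ^ (d + r)) * |u| ^ r * Real.exp |z| := by
        gcongr ?_ * _ * _
        exact abs_mul_pow_le hψ le_rfl z
    _ = _ := by ring

lemma gauss_taylor {u : ℝ} (hu : |u| ≤ 1) :
    |Real.exp (-u ^ 2 / 2) - ∑ i ∈ Finset.range r, gaussCoef i * u ^ (2 * i)|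
      ≤ |u| ^ r * Real.exp 1 := by
  have h := exp_taylor_bound (-u ^ 2 / 2) r
  have e : ∑ m ∈ Finset.range r, (-u ^ 2 / 2) ^ m / m.factorial
      = ∑ i ∈ Finset.range r, gaussCoef i * u ^ (2 * i) := by
    refine Finset.sum_congr rfl fun i _ => ?_
    rw [gaussCoef, pow_mul, div_mul_eq_mul_div, ← mul_pow]
    congr 2
    ring
  rw [e] at h
  have h1 : |(-u ^ 2 / 2)| ≤ |u| := by
    rw [abs_div, abs_neg, abs_pow, abs_two]
    nlinarith [abs_nonneg u]
  refine h.trans ?_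
  gcongr
  exact h1.trans hu

lemma taylorPoly_term_bound (hc : Continuous ψ) (hψ : ∀ z, |ψ z| ≤ C * (1 + |z|) ^ d)
    {i j : ℕ} (hj : j < r) {v w : ℝ} (hv : |v| ≤ w) :
    |gaussCoef i * expMoment ψ j * v| ≤ C * weightInt (d + r) * w := by
  have hm := (expMoment_bound hc hψ hj.le).2
  rw [abs_mul]
  refine mul_le_mul ?_ hv (abs_nonneg _) ((abs_nonneg _).trans hm)
  rw [abs_mul]
  exact (mul_le_of_le_one_left (abs_nonneg _) (abs_gaussCoef_le i)).trans hm

lemma sum_sum_bound {g : ℕ → ℕ → ℝ} {B : ℝ} (h : ∀ i < r, ∀ j < r, |g i j| ≤ B) :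
    |∑ i ∈ Finset.range r, ∑ j ∈ Finset.range r, g i j| ≤ (r : ℝ) ^ 2 * B := by
  calc |∑ i ∈ Finset.range r, ∑ j ∈ Finset.range r, g i j|
      ≤ ∑ i ∈ Finset.range r, ∑ j ∈ Finset.range r, |g i j| :=
        (Finset.abs_sum_le_sum_abs _ _).trans
          (Finset.sum_le_sum fun i _ => Finset.abs_sum_le_sum_abs _ _)
    _ ≤ ∑ i ∈ Finset.range r, ∑ j ∈ Finset.range r, B :=
        Finset.sum_le_sum fun i hi => Finset.sum_le_sum fun j hj =>
          h i (Finset.mem_range.1 hi) j (Finset.mem_range.1 hj)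
    _ = _ := by simp; ring

/-- Near the origin the two Taylor expansions are multiplied and truncated. -/
lemma shift_taylor_small (hC : 0 ≤ C) (hc : Continuous ψ)
    (hψ : ∀ z, |ψ z| ≤ C * (1 + |z|) ^ d) {u : ℝ} (hu : |u| ≤ 1) :
    |∫ y, ψ (y + u) ∂gaussγ - (taylorPoly r ψ).eval u|
      ≤ (Real.exp 1 + r + r ^ 2) * (C * weightInt (d + r) * |u| ^ r) := by
  have hW := weightInt_nonneg (d + r)
  rw [integral_shift, taylorPoly_eval]
  set A := Real.exp (-u ^ 2 / 2)
  set B := ∫ z, ψ z * Real.exp (u * z) ∂gaussγ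
  set PA := ∑ i ∈ Finset.range r, gaussCoef i * u ^ (2 * i) with hPA
  set PB := ∑ j ∈ Finset.range r, expMoment ψ j * u ^ j with hPB
  set T := ∑ i ∈ Finset.range r, ∑ j ∈ Finset.range r,
      if 2 * i + j < r then gaussCoef i * expMoment ψ j * u ^ (2 * i + j) else 0 with hT
  have h1 : |A - PA| ≤ |u| ^ r * Real.exp 1 := gauss_taylor hu
  have h2 : |B| ≤ C * weightInt (d + r) := (exp_integral_bound hc hψ hu).2
  have h3 : |PA| ≤ r := by
    refine (Finset.abs_sum_le_sum_abs _ _).trans ?_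
    calc _ ≤ ∑ i ∈ Finset.range r, (1 : ℝ) := Finset.sum_le_sum fun i _ => by
            rw [abs_mul, abs_pow]
            exact mul_le_one₀ (abs_gaussCoef_le i) (by positivity)
              (pow_le_one₀ (abs_nonneg u) hu)
      _ = r := by simp
  have h4 : |B - PB| ≤ C * |u| ^ r * weightInt (d + r) := exp_integral_taylor hc hψ hu
  have h5 : |PA * PB - T| ≤ (r : ℝ) ^ 2 * (C * weightInt (d + r) * |u| ^ r) := by
    rw [hPA, hPB, hT, Finset.sum_mul_sum, ← Finset.sum_sub_distrib]
    simp_rw [← Finset.sum_sub_distrib]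
    refine sum_sum_bound fun i _ j hj => ?_
    split_ifs with h
    · rw [show gaussCoef i * u ^ (2 * i) * (expMoment ψ j * u ^ j)
        - gaussCoef i * expMoment ψ j * u ^ (2 * i + j) = 0 by ring, abs_zero]
      positivity
    · rw [show gaussCoef i * u ^ (2 * i) * (expMoment ψ j * u ^ j) - 0
        = gaussCoef i * expMoment ψ j * u ^ (2 * i + j) by ring]
      refine taylorPoly_term_bound hc hψ hj ?_
      rw [abs_pow]
      exact pow_le_pow_of_le_one (abs_nonneg u) hu (not_lt.1 h)
  have e : A * B - T = (A - PA) * B + PA * (B - PB) + (PA * PB - T) := by ring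
  rw [e]
  calc _ ≤ |(A - PA) * B| + |PA * (B - PB)| + |PA * PB - T| := abs_add_three _ _ _
    _ ≤ (|u| ^ r * Real.exp 1) * (C * weightInt (d + r))
        + r * (C * |u| ^ r * weightInt (d + r))
        + (r : ℝ) ^ 2 * (C * weightInt (d + r) * |u| ^ r) := by
      rw [abs_mul, abs_mul]
      gcongr
    _ = _ := by ring

lemma shift_bound (hc : Continuous ψ) (hψ : ∀ z, |ψ z| ≤ C * (1 + |z|) ^ d) (hC : 0 ≤ C)
    (u : ℝ) : |∫ y, ψ (y + u) ∂gaussγ| ≤ C * (1 + |u|) ^ d * weightInt (d + r) := by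
  refine (integrable_and_bound (by fun_prop) (weight_bound_of_pow fun y => ?_)).2
  have hy := abs_nonneg y
  have hu := abs_nonneg u
  calc |ψ (y + u)| ≤ C * (1 + |y + u|) ^ d := hψ _
    _ ≤ C * ((1 + |u|) * (1 + |y|)) ^ d := by
      gcongr
      nlinarith [abs_add_le y u]
    _ = C * (1 + |u|) ^ d * (1 + |y|) ^ d := by rw [mul_pow]; ring
    _ ≤ _ := by
      gcongr
      · linarith
      · omega

/-- Away from the origin every monomial of degree less than `r` is at most `|u|^r`, so the
function and its Taylor polynomial are bounded separately. -/
lemma shift_taylor_large (hC : 0 ≤ C) (hc : Continuous ψ)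
    (hψ : ∀ z, |ψ z| ≤ C * (1 + |z|) ^ d) {u : ℝ} (hu : 1 ≤ |u|) :
    |∫ y, ψ (y + u) ∂gaussγ - (taylorPoly r ψ).eval u|
      ≤ (1 + r ^ 2) * (C * weightInt (d + r) * |u| ^ r * (1 + |u|) ^ d) := by
  have hW := weightInt_nonneg (d + r)
  have h1 := shift_bound (r := r) hc hψ hC u
  have h2 : |(taylorPoly r ψ).eval u| ≤ (r : ℝ) ^ 2 * (C * weightInt (d + r) * |u| ^ r) := by
    rw [taylorPoly_eval]
    refine sum_sum_bound fun i _ j hj => ?_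
    split_ifs with h
    · refine taylorPoly_term_bound hc hψ hj ?_
      rw [abs_pow]
      exact pow_le_pow_right₀ hu h.le
    · rw [abs_zero]; positivity
  have hd : 1 ≤ (1 + |u|) ^ d := one_le_pow₀ (by linarith)
  have hr : 1 ≤ |u| ^ r := one_le_pow₀ hu
  calc _ ≤ |∫ y, ψ (y + u) ∂gaussγ| + |(taylorPoly r ψ).eval u| := abs_sub _ _
    _ ≤ C * (1 + |u|) ^ d * weightInt (d + r) * |u| ^ r
        + (r : ℝ) ^ 2 * (C * weightInt (d + r) * |u| ^ r) * (1 + |u|) ^ d := by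
      refine add_le_add (h1.trans (le_mul_of_one_le_right (by positivity) hr))
        (h2.trans (le_mul_of_one_le_right (by positivity) hd))
    _ = _ := by ring

lemma shift_taylor (hC : 0 ≤ C) (hc : Continuous ψ)
    (hψ : ∀ z, |ψ z| ≤ C * (1 + |z|) ^ d) (u : ℝ) :
    |∫ y, ψ (y + u) ∂gaussγ - (taylorPoly r ψ).eval u|
      ≤ (Real.exp 1 + r + r ^ 2) * (C * weightInt (d + r) * |u| ^ r * (1 + |u|) ^ d) := by
  have hW := weightInt_nonneg (d + r)
  have hd : 1 ≤ (1 + |u|) ^ d := one_le_pow₀ (by linarith [abs_nonneg u])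
  rcases le_total |u| 1 with hu | hu
  · refine (shift_taylor_small hC hc hψ hu).trans ?_
    gcongr ?_ * ?_
    exact le_mul_of_one_le_right (by positivity) hd
  · refine (shift_taylor_large hC hc hψ hu).trans ?_
    gcongr
    have := Real.one_le_exp (zero_le_one (α := ℝ))
    linarith [Nat.cast_nonneg (α := ℝ) r]

end Expansion

/-! ### The Hermite projection on functions of polynomial growth -/

/-- Subtracting the Hermite projection of order `r ≤ n` preserves a bound of order `(1+|x|)^n`,
up to a constant. -/
lemma projection_bound (r n : ℕ) (hrn : r ≤ n) :
    ∃ N : ℝ, 0 ≤ N ∧ ∀ (K : ℝ) (R : ℝ → ℝ), AEStronglyMeasurable R gaussγ →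
      (∀ x, |R x| ≤ K * (1 + |x|) ^ n) →
      (∀ k, Integrable (fun x => Hpoly k x * R x) gaussγ) ∧
      ∀ x, |R x - ∑ k ∈ Finset.range r, ccoef k R * Hpoly k x| ≤ K * N * (1 + |x|) ^ n := by
  have hH : ∀ k, ∃ N : ℝ, 0 ≤ N ∧ ∀ x, |Hpoly k x| ≤ N * (1 + |x|) ^ k := fun k => by
    simpa only [Hpoly_eq] using exists_eval_bound (hermR k) (natDegree_hermR k).le
  choose N hN0 hN using hH
  have hW := weightInt_nonneg
  refine ⟨1 + ∑ k ∈ Finset.range r, N k * weightInt (k + n) * N k,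
    add_nonneg zero_le_one (Finset.sum_nonneg fun k _ =>
      mul_nonneg (mul_nonneg (hN0 k) (hW _)) (hN0 k)), fun K R hR hb => ?_⟩
  have hmeas : ∀ k, AEStronglyMeasurable (fun x => Hpoly k x * R x) gaussγ := fun k => by
    have h : Hpoly k = fun x => (hermR k).eval x := funext (Hpoly_eq k)
    refine AEStronglyMeasurable.mul ?_ hR
    rw [h]
    exact (hermR k).continuous.aestronglyMeasurable
  have hI := fun k => integrable_and_bound (n := k + n) (K := N k * K) (hmeas k)
    (weight_bound_of_pow fun z => by
      rw [abs_mul]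
      calc |Hpoly k z| * |R z| ≤ (N k * (1 + |z|) ^ k) * (K * (1 + |z|) ^ n) :=
            mul_le_mul (hN k z) (hb z) (abs_nonneg _) ((abs_nonneg _).trans (hN k z))
        _ = _ := by rw [pow_add]; ring)
  have hK : 0 ≤ K := by simpa using (abs_nonneg (R 0)).trans (hb 0)
  refine ⟨fun k => (hI k).1, fun x => ?_⟩
  have hcoef : ∀ k, |ccoef k R| ≤ N k * K * weightInt (k + n) := fun k => by
    have h1 : (1 : ℝ) ≤ k.factorial := by
      exact_mod_cast Nat.one_le_iff_ne_zero.2 k.factorial_ne_zero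
    rw [ccoef, abs_mul, abs_of_nonneg (by positivity)]
    exact (mul_le_of_le_one_left (abs_nonneg _) (div_le_one_of_le₀ h1 (by positivity))).trans
      (hI k).2
  have hx : 1 ≤ 1 + |x| := by linarith [abs_nonneg x]
  calc _ ≤ |R x| + ∑ k ∈ Finset.range r, |ccoef k R * Hpoly k x| :=
        (abs_sub _ _).trans (add_le_add le_rfl (Finset.abs_sum_le_sum_abs _ _))
    _ ≤ K * (1 + |x|) ^ n + ∑ k ∈ Finset.range r,
          (N k * K * weightInt (k + n)) * (N k * (1 + |x|) ^ n) := by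
      refine add_le_add (hb x) (Finset.sum_le_sum fun k hk => ?_)
      rw [abs_mul]
      refine mul_le_mul (hcoef k) ((hN k x).trans ?_) (abs_nonneg _)
        ((abs_nonneg _).trans (hcoef k))
      exact mul_le_mul_of_nonneg_left
        (pow_le_pow_right₀ hx ((Finset.mem_range.1 hk).le.trans hrn)) (hN0 k)
    _ = _ := by
      rw [mul_add, add_mul, mul_one, Finset.mul_sum, Finset.sum_mul]
      congr 1
      exact Finset.sum_congr rfl fun k _ => by ring

lemma comp_mem_degreeLT {r : ℕ} {p : ℝ[X]} (hp : p ∈ degreeLT ℝ r) (a : ℝ) :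
    p.comp (C a * X) ∈ degreeLT ℝ r := by
  rw [mem_degreeLT, degree_lt_iff_coeff_zero] at hp ⊢
  intro m hm
  rw [comp_C_mul_X_coeff, hp m hm, zero_mul]

/-! ### The Mehler semigroup -/

lemma measurable_Pt {φ : ℝ → ℝ} (hφ : Continuous φ) (t : ℝ) :
    AEStronglyMeasurable (Pt t φ) gaussγ := by
  have h : StronglyMeasurable (fun q : ℝ × ℝ =>
      φ (q.1 * Real.exp (-t) + Real.sqrt (1 - Real.exp (-2 * t)) * q.2)) :=
    (by fun_prop : Continuous _).stronglyMeasurable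
  exact (h.integral_prod_right (ν := gaussγ)).aestronglyMeasurable

lemma sqrt_bounds {t : ℝ} (ht : 1 ≤ t) :
    1 / 2 ≤ Real.sqrt (1 - Real.exp (-2 * t)) ∧ Real.sqrt (1 - Real.exp (-2 * t)) ≤ 1
      ∧ Real.exp (-t) ≤ 1 / 2 := by
  have h1 : Real.exp (-t) ≤ 1 / 2 := by
    have h2 : (2 : ℝ) ≤ Real.exp t := by linarith [Real.add_one_le_exp t]
    rw [Real.exp_neg, one_div]
    exact inv_anti₀ two_pos h2
  have h0 := Real.exp_pos (-t)
  have h2 : Real.exp (-2 * t) = Real.exp (-t) ^ 2 := by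
    rw [← Real.exp_nat_mul]; congr 1; push_cast; ring
  refine ⟨Real.le_sqrt_of_sq_le ?_, ?_, h1⟩
  · rw [h2]; nlinarith
  · exact Real.sqrt_le_one.2 (by linarith [Real.exp_pos (-2 * t)])

/-- For every `r` and `d` there is `M > 0`, depending only on `r` and `d`, such that
for every continuous `φ` with `|φ(x)| ≤ C (1+|x|^d)`, all `t ≥ 1` and all `x`,
`|P_t φ(x) - ∑_{k<r} c_k(P_t φ) H_k(x)| ≤ e^{-rt} C M (1+|x|^{d+r})`. -/
theorem stmt_7 (r d : ℕ) :
    ∃ M : ℝ, 0 < M ∧ ∀ (C : ℝ), 0 < C → ∀ φ : ℝ → ℝ, Continuous φ →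
      (∀ x : ℝ, |φ x| ≤ C * (1 + |x| ^ d)) →
      ∀ t : ℝ, 1 ≤ t → ∀ x : ℝ,
        |Pt t φ x - ∑ k ∈ Finset.range r, ccoef k (Pt t φ) * Hpoly k x|
          ≤ Real.exp (-(r : ℝ) * t) * C * M * (1 + |x| ^ (d + r)) := by
  obtain ⟨N, hN0, hN⟩ := projection_bound r (d + r) (Nat.le_add_left r d)
  have hW := weightInt_nonneg (d + r)
  set L : ℝ := (Real.exp 1 + r + r ^ 2) * (2 * weightInt (d + r) * 2 ^ r) with hL
  have hL0 : 0 ≤ L := by positivity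
  refine ⟨L * N * 2 ^ (d + r) + 1, by positivity, fun C hC φ hφ hb t ht x => ?_⟩
  obtain ⟨hσ2, hσ1, hρ⟩ := sqrt_bounds ht
  set σ := Real.sqrt (1 - Real.exp (-2 * t)) with hσ
  set ρ := Real.exp (-t) with hρdef
  have hρ0 : 0 < ρ := Real.exp_pos _
  have hσ0 : 0 < σ := by linarith
  have ha0 : 0 ≤ ρ / σ := by positivity
  have ha : ρ / σ ≤ 2 * ρ := by
    rw [div_le_iff₀ hσ0]; nlinarith
  -- `P_t φ` is the Gaussian average of translates of `ψ z = φ (σ z)`, evaluated at `(ρ/σ) x`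
  set ψ : ℝ → ℝ := fun z => φ (σ * z) with hψdef
  have hψc : Continuous ψ := by fun_prop
  have hψ : ∀ z, |ψ z| ≤ (2 * C) * (1 + |z|) ^ d := fun z => by
    have hz := abs_nonneg z
    have h1 : 1 ≤ (1 + |z|) ^ d := one_le_pow₀ (by linarith)
    have h2 : |σ * z| ^ d ≤ (1 + |z|) ^ d := by
      refine pow_le_pow_left₀ (abs_nonneg _) ?_ d
      rw [abs_mul, abs_of_pos hσ0]
      nlinarith
    refine (hb _).trans ?_
    nlinarith
  have hPt : ∀ x, Pt t φ x = ∫ y, ψ (y + ρ / σ * x) ∂gaussγ := fun x => by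
    refine integral_congr_ae (Filter.Eventually.of_forall fun y => ?_)
    change φ (x * ρ + σ * y) = φ (σ * (y + ρ / σ * x))
    congr 1
    field_simp
    ring
  set p : ℝ[X] := (taylorPoly r ψ).comp (Polynomial.C (ρ / σ) * X) with hp
  have hpmem : p ∈ degreeLT ℝ r := comp_mem_degreeLT (taylorPoly_mem r ψ) _
  have hR : ∀ x, |Pt t φ x - p.eval x| ≤ (C * ρ ^ r * L) * (1 + |x|) ^ (d + r) := fun x => by
    have hx := abs_nonneg x
    have h := shift_taylor (r := r) (by positivity) hψc hψ (ρ / σ * x)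
    have hpe : p.eval x = (taylorPoly r ψ).eval (ρ / σ * x) := by simp [hp, eval_comp]
    rw [hPt, hpe]
    refine h.trans ?_
    have hu : |ρ / σ * x| ≤ 2 * ρ * (1 + |x|) := by
      rw [abs_mul, abs_of_nonneg ha0]
      exact mul_le_mul ha (by linarith) hx (by positivity)
    have hu' : 1 + |ρ / σ * x| ≤ 1 + |x| := by
      rw [abs_mul, abs_of_nonneg ha0]
      nlinarith
    calc (Real.exp 1 + r + r ^ 2) * (2 * C * weightInt (d + r) * |ρ / σ * x| ^ r
            * (1 + |ρ / σ * x|) ^ d)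
        ≤ (Real.exp 1 + r + r ^ 2) * (2 * C * weightInt (d + r) * (2 * ρ * (1 + |x|)) ^ r
            * (1 + |x|) ^ d) := by gcongr
      _ = _ := by rw [hL, mul_pow, mul_pow, pow_add]; ring
  obtain ⟨hint, hbound⟩ := hN (C * ρ ^ r * L) (fun x => Pt t φ x - p.eval x)
    ((measurable_Pt hφ t).sub p.continuous.aestronglyMeasurable) hR
  have hcoef : ∀ k, ccoef k (Pt t φ)
      = ccoef k (fun x => Pt t φ x - p.eval x) + ccoef k (fun x => p.eval x) := fun k => by
    have hint' : Integrable (fun x => Hpoly k x * p.eval x) gaussγ := by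
      simpa [Hpoly_eq] using integrable_eval (hermR k * p)
    simp only [ccoef]
    rw [← mul_add, ← integral_add (hint k) hint']
    congr 2
    ext x
    ring
  have hmain : Pt t φ x - ∑ k ∈ Finset.range r, ccoef k (Pt t φ) * Hpoly k x
      = (Pt t φ x - p.eval x)
        - ∑ k ∈ Finset.range r, ccoef k (fun x => Pt t φ x - p.eval x) * Hpoly k x := by
    simp_rw [hcoef, add_mul, Finset.sum_add_distrib]
    rw [hermite_expansion hpmem]
    ring
  have hexp : Real.exp (-(r : ℝ) * t) = ρ ^ r := by
    rw [hρdef, ← Real.exp_nat_mul]; congr 1; ring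
  have hx := abs_nonneg x
  have hpow : (1 + |x|) ^ (d + r) ≤ 2 ^ (d + r) * (1 + |x| ^ (d + r)) := by
    have h := add_pow_le zero_le_one hx (d + r)
    rw [one_pow] at h
    refine h.trans ?_
    gcongr
    · norm_num
    · omega
  rw [hmain, hexp]
  calc _ ≤ C * ρ ^ r * L * N * (1 + |x|) ^ (d + r) := hbound x
    _ ≤ C * ρ ^ r * L * N * (2 ^ (d + r) * (1 + |x| ^ (d + r))) := by gcongr
    _ = ρ ^ r * C * (L * N * 2 ^ (d + r)) * (1 + |x| ^ (d + r)) := by ring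
    _ ≤ _ := by
      gcongr
      linarith
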